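/- Let K be a real n×n matrix that is symmetric positive semidefinite, entrywise nonnegative, irreducible, and has K_{ii} > 0 for all 1 ≤ i ≤ n; let D = diag(K𝟙) and W = D^{−1}K. Let A be a nonzero real m×n matrix with A𝟙 ≠ 0, and b ∈ ℝ^m. Fix γ with 0 < γ < 1/λ_max(D^{−1/2}AᵀA D^{−1/2}) and a real sequence {α_k}_{k≥1} with α_k → 1. Then there exists a unique x* ∈ ℝ^n such that for every initialization x₀ ∈ ℝ^n, the scaled-PnP-FISTA iterates defined by y₁ = x₀ and, for k ≥ 1, x_k = W(y_k − γ D^{−1}Aᵀ(A y_k − b)) and y_{k+1} = x_k + α_k(x_k − x_{k−1}), converge linearly to x*: there exist C > 0, β ∈ [0,1), and K' ≥ 1 such that ‖x_k − x*‖₂ ≤ C·β^k for all k ≥ K'. Moreover, every complex eigenvalue of P_γ := W(I_n − γ D^{−1}AᵀA) is real and lies in [0,1). -/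

import Mathlib

open Filter Matrix

/-- The Euclidean (ℓ²) norm on `Fin n → ℝ`. -/
noncomputable def norm2 {n : ℕ} (x : Fin n → ℝ) : ℝ := Real.sqrt (∑ i, x i ^ 2)

/-- The largest eigenvalue of a real (symmetric) matrix, as the supremum of its real
spectrum. -/
noncomputable def lamMax {n : ℕ} (S : Matrix (Fin n) (Fin n) ℝ) : ℝ := sSup (spectrum ℝ S)

/-!
Put `B = D⁻¹KD⁻¹`, `G = AᵀA` and `H = D - γG`, so that `P_γ = BH`. The step size condition says that
`H` is positive definite. Writing `H = RᵀR`, the matrix `BH` is similar to the symmetric matrix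
`RBRᵀ`, hence has an eigenbasis with real eigenvalues. They are nonnegative because `HBH` is
positive semidefinite, and less than `1` because
`H - HBH = (HD⁻¹)(D - K + γG)(D⁻¹H) + (γGD⁻¹)H(γD⁻¹G)` is positive definite: `D - K` is a graph
Laplacian, whose quadratic form `½ ∑ K i j (w i - w j)²` vanishes only at constant vectors by
irreducibility, and `G` is positive on those since `A𝟙 ≠ 0`.

In an eigenbasis the iteration decouples into scalar recursions
`c (k + 1) = l (c k + α k (c k - c (k - 1)))` with `0 ≤ l < 1`, for which
`(1 - l) (c k)² + l (c k - c (k - 1))²` shrinks by a factor `β² < 1` as soon as `l ≤ β²` and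
`l (α k)² ≤ β²`.
-/

open Asymptotics Topology

section LinearConvergence

/-- Linear convergence of a sequence to `a`, i.e. at a geometric rate `β < 1`. Being stated up to a
constant factor, the notion does not depend on the choice between equivalent norms. -/
def ConvergesLinearly {E : Type*} [NormedAddCommGroup E] (x : ℕ → E) (a : E) : Prop :=
  ∃ β ∈ Set.Ico (0 : ℝ) 1, (fun k => x k - a) =O[atTop] fun k => β ^ k

lemma ConvergesLinearly.tendsto {E : Type*} [NormedAddCommGroup E] {x : ℕ → E} {a : E}
    (h : ConvergesLinearly x a) : Tendsto x atTop (𝓝 a) := by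
  obtain ⟨β, hβ, hx⟩ := h
  exact tendsto_sub_nhds_zero_iff.1
    (hx.trans_tendsto (tendsto_pow_atTop_nhds_zero_of_lt_one hβ.1 hβ.2))

lemma norm2_eq_norm_toLp {n : ℕ} (x : Fin n → ℝ) : norm2 x = ‖WithLp.toLp 2 x‖ := by
  simp [norm2, EuclideanSpace.norm_eq]

lemma isBigO_iff_norm2 {n : ℕ} {f : ℕ → Fin n → ℝ} {g : ℕ → ℝ} :
    f =O[atTop] g ↔ (fun k => norm2 (f k)) =O[atTop] g := by
  let e := (EuclideanSpace.equiv (Fin n) ℝ).symm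
  simp only [norm2_eq_norm_toLp, isBigO_norm_left]
  exact ⟨(e.isBigO_comp f atTop).trans, (e.isBigO_comp_rev f atTop).trans⟩

lemma convergesLinearly_iff_norm2 {n : ℕ} {x : ℕ → Fin n → ℝ} {a : Fin n → ℝ} :
    ConvergesLinearly x a ↔ ∃ C, 0 < C ∧ ∃ β, 0 ≤ β ∧ β < 1 ∧ ∃ K', 1 ≤ K' ∧ ∀ k, K' ≤ k →
      norm2 (x k - a) ≤ C * β ^ k := by
  have h_norm (β : ℝ) (hβ : 0 ≤ β) (C : ℝ) (k : ℕ) :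
      ‖norm2 (x k - a)‖ ≤ C * ‖β ^ k‖ ↔ norm2 (x k - a) ≤ C * β ^ k := by
    rw [Real.norm_of_nonneg (show 0 ≤ norm2 (x k - a) from Real.sqrt_nonneg _),
      Real.norm_of_nonneg (pow_nonneg hβ k)]
  constructor
  · rintro ⟨β, ⟨hβ0, hβ1⟩, hx⟩
    obtain ⟨C, hC, hb⟩ := (isBigO_iff_norm2.1 hx).exists_pos
    obtain ⟨N, hN⟩ := eventually_atTop.1 hb.bound
    exact ⟨C, hC, β, hβ0, hβ1, max N 1, le_max_right _ _,
      fun k hk => (h_norm β hβ0 C k).1 (hN k (le_of_max_le_left hk))⟩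
  · rintro ⟨C, -, β, hβ0, hβ1, N, -, hN⟩
    refine ⟨β, ⟨hβ0, hβ1⟩, isBigO_iff_norm2.2 (IsBigO.of_bound C ?_)⟩
    filter_upwards [eventually_ge_atTop N] with k hk
    exact (h_norm β hβ0 C k).2 (hN k hk)

lemma isBigO_pow_of_eventually_le_mul {u : ℕ → ℝ} {r : ℝ} (hr : 0 < r) (hu : ∀ k, 0 ≤ u k)
    (h : ∀ᶠ k in atTop, u (k + 1) ≤ r * u k) : u =O[atTop] fun k => r ^ k := by
  obtain ⟨N, hN⟩ := eventually_atTop.1 h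
  have h_geom : ∀ k, N ≤ k → u k ≤ u N / r ^ N * r ^ k := by
    refine Nat.le_induction (by rw [div_mul_cancel₀ _ (pow_ne_zero N hr.ne')]) fun k hk ih => ?_
    calc u (k + 1) ≤ r * u k := hN k hk
      _ ≤ r * (u N / r ^ N * r ^ k) := by gcongr
      _ = u N / r ^ N * r ^ (k + 1) := by ring
  refine IsBigO.of_bound (u N / r ^ N) ?_
  filter_upwards [eventually_ge_atTop N] with k hk
  rw [Real.norm_of_nonneg (hu k), Real.norm_of_nonneg (pow_pos hr k).le]
  exact h_geom k hk

lemma exists_forall_le_pow {ι : Type*} [Finite ι] {l : ι → ℝ} (hl : ∀ i, l i < 1) (n : ℕ) :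
    ∃ t ∈ Set.Ioo (0 : ℝ) 1, ∀ i, l i ≤ t ^ n := by
  have h_tendsto : Tendsto (fun t : ℝ => t ^ n) (𝓝[<] 1) (𝓝 1) :=
    ((continuous_pow n).tendsto' 1 1 (one_pow n)).mono_left nhdsWithin_le_nhds
  have h_le : ∀ᶠ t : ℝ in 𝓝[<] 1, ∀ i, l i ≤ t ^ n :=
    eventually_all.2 fun i => (h_tendsto.eventually (lt_mem_nhds (hl i))).mono fun _ => le_of_lt
  have h_mem : ∀ᶠ t : ℝ in 𝓝[<] 1, t ∈ Set.Ioo (0 : ℝ) 1 := Ioo_mem_nhdsLT one_pos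
  obtain ⟨t, ht, htl⟩ := (h_mem.and h_le).exists
  exact ⟨t, ht, htl⟩

end LinearConvergence

section Eigenbasis

variable {ι : Type*}

lemma repr_apply_of_eigenbasis {R M : Type*} [CommRing R] [AddCommGroup M] [Module R M]
    {T : M →ₗ[R] M} {v : Module.Basis ι R M} {l : ι → R} (hT : ∀ i, T (v i) = l i • v i) (x : M)
    (i : ι) :
    v.repr (T x) i = l i * v.repr x i := by
  have h_coord : v.coord i ∘ₗ T = l i • v.coord i := by
    refine v.ext fun j => ?_
    rcases eq_or_ne j i with rfl | hij
    · simp [hT]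
    · simp [hT, hij]
  exact LinearMap.congr_fun h_coord x

lemma exists_apply_add_eq_self [Finite ι] {F M : Type*} [Field F] [AddCommGroup M] [Module F M]
    {T : M →ₗ[F] M} {v : Module.Basis ι F M} {l : ι → F} (hT : ∀ i, T (v i) = l i • v i)
    (hl : ∀ i, l i ≠ 1) (q : M) : ∃ x, T x + q = x := by
  refine ⟨v.equivFun.symm fun i => v.repr q i / (1 - l i), v.ext_elem fun i => ?_⟩
  have h_ne : 1 - l i ≠ 0 := sub_ne_zero.2 (hl i).symm
  rw [map_add, Finsupp.add_apply, repr_apply_of_eigenbasis hT, ← v.equivFun_apply,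
    LinearEquiv.apply_symm_apply]
  field_simp
  ring

variable [Fintype ι]

open scoped ComplexOrder MatrixOrder in
lemma exists_eigenbasis_mul {𝕜 : Type*} [RCLike 𝕜] {B H : Matrix ι ι 𝕜} (hB : B.IsHermitian)
    (hH : H.PosDef) :
    ∃ (v : Module.Basis ι 𝕜 (ι → 𝕜)) (l : ι → ℝ), ∀ i, (B * H) *ᵥ v i = l i • v i := by
  classical
  obtain ⟨R, hR, rfl⟩ :=
    CStarAlgebra.isStrictlyPositive_iff_eq_star_mul_self.1 hH.isStrictlyPositive
  have hRdet : IsUnit R.det := (isUnit_iff_isUnit_det R).1 hR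
  have hS : (R * B * Rᴴ).IsHermitian := isHermitian_mul_mul_conjTranspose R hB
  have h_conj : B * (star R * R) * R⁻¹ = R⁻¹ * (R * B * Rᴴ) := by
    rw [star_eq_conjTranspose, mul_assoc, mul_assoc, mul_nonsing_inv R hRdet, mul_one,
      mul_assoc, nonsing_inv_mul_cancel_left R _ hRdet]
  refine ⟨(hS.eigenvectorBasis.toBasis.map (WithLp.linearEquiv 2 𝕜 (ι → 𝕜))).map
    (toLin'OfInv (mul_nonsing_inv R hRdet) (nonsing_inv_mul R hRdet)), hS.eigenvalues, ?_⟩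
  intro i
  calc (B * (star R * R)) *ᵥ R⁻¹ *ᵥ (hS.eigenvectorBasis i).ofLp
      = R⁻¹ *ᵥ (R * B * Rᴴ) *ᵥ (hS.eigenvectorBasis i).ofLp := by
        rw [mulVec_mulVec, h_conj, ← mulVec_mulVec]
    _ = hS.eigenvalues i • R⁻¹ *ᵥ (hS.eigenvectorBasis i).ofLp := by
        rw [hS.mulVec_eigenvectorBasis, mulVec_smul]

lemma eigenvalue_mem_Ico {B H : Matrix ι ι ℝ} (hB : B.PosSemidef) (hH : H.PosDef)
    (hBH : (H - H * B * H).PosDef) {l : ℝ} {v : ι → ℝ} (hv : v ≠ 0)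
    (hl : (B * H) *ᵥ v = l • v) : l ∈ Set.Ico (0 : ℝ) 1 := by
  have hHv : 0 < v ⬝ᵥ (H *ᵥ v) := hH.dotProduct_mulVec_pos hv
  have h_quad : v ⬝ᵥ ((H * B * H) *ᵥ v) = l * (v ⬝ᵥ (H *ᵥ v)) := by
    rw [mul_assoc, ← mulVec_mulVec, hl, mulVec_smul, dotProduct_smul, smul_eq_mul]
  constructor
  · have h_nonneg := (hB.conjTranspose_mul_mul_same H).dotProduct_mulVec_nonneg v
    rw [hH.isHermitian.eq, star_trivial, h_quad] at h_nonneg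
    exact nonneg_of_mul_nonneg_left h_nonneg hHv
  · have h_pos := hBH.dotProduct_mulVec_pos hv
    rw [star_trivial, sub_mulVec, dotProduct_sub, h_quad, sub_pos] at h_pos
    exact (mul_lt_iff_lt_one_left hHv).1 h_pos

open Polynomial in
lemma charpoly_eq_prod_of_eigenbasis [DecidableEq ι] {R : Type*} [CommRing R] {P : Matrix ι ι R}
    {v : Module.Basis ι R (ι → R)} {l : ι → R} (hP : ∀ i, P *ᵥ v i = l i • v i) :
    P.charpoly = ∏ i, (X - C (l i)) := by
  have h_diag : LinearMap.toMatrix v v P.mulVecLin = diagonal l := by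
    ext i j
    rw [LinearMap.toMatrix_apply, repr_apply_of_eigenbasis (T := P.mulVecLin) hP, v.repr_self,
      diagonal_apply, Finsupp.single_apply, mul_ite, mul_one, mul_zero]
    simp only [eq_comm]
  rw [← charpoly_mulVecLin, ← LinearMap.charpoly_toMatrix _ v, h_diag, charpoly_diagonal]

lemma spectrum_map_eq_range_of_eigenbasis [DecidableEq ι] {F L : Type*} [Field F] [Field L]
    (f : F →+* L) {P : Matrix ι ι F} {v : Module.Basis ι F (ι → F)} {l : ι → F}
    (hP : ∀ i, P *ᵥ v i = l i • v i) : spectrum L (P.map f) = Set.range (f ∘ l) := by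
  ext μ
  rw [mem_spectrum_iff_isRoot_charpoly, charpoly_map, charpoly_eq_prod_of_eigenbasis hP]
  simp [Polynomial.IsRoot, Polynomial.map_prod, Polynomial.eval_prod, Finset.prod_eq_zero_iff,
    sub_eq_zero, eq_comm (a := μ)]

end Eigenbasis

section Momentum

lemma isBigO_pow_of_momentum_recurrence {l β : ℝ} {α c : ℕ → ℝ} (hl0 : 0 ≤ l) (hl1 : l < 1)
    (hβ : 0 < β) (hlβ : l ≤ β ^ 2) (hα : ∀ᶠ k in atTop, l * α k ^ 2 ≤ β ^ 2)
    (hc : ∀ᶠ k in atTop, c (k + 1) = l * (c k + α k * (c k - c (k - 1)))) :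
    c =O[atTop] fun k => β ^ k := by
  let V : ℕ → ℝ := fun k => (1 - l) * c k ^ 2 + l * (c k - c (k - 1)) ^ 2
  have hl1' : 0 < 1 - l := sub_pos.2 hl1
  have hV_nonneg : ∀ k, 0 ≤ V k := fun k => by positivity
  have hV_le : ∀ᶠ k in atTop, V (k + 1) ≤ β ^ 2 * V k := by
    filter_upwards [hα, hc] with k hαk hck
    -- The cross terms in `α k` cancel: this is what dictates the weights of `V`.
    calc V (k + 1) = l * ((1 - l) * c k ^ 2) + l * α k ^ 2 * (l * (c k - c (k - 1)) ^ 2) := by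
          simp only [V, Nat.add_sub_cancel, hck]; ring
      _ ≤ β ^ 2 * ((1 - l) * c k ^ 2) + β ^ 2 * (l * (c k - c (k - 1)) ^ 2) := by gcongr
      _ = β ^ 2 * V k := by ring
  have hV : V =O[atTop] fun k => (β ^ 2) ^ k :=
    isBigO_pow_of_eventually_le_mul (by positivity) hV_nonneg hV_le
  have hcV : (fun k => c k ^ 2) =O[atTop] V := by
    refine IsBigO.of_bound (1 - l)⁻¹ (Eventually.of_forall fun k => ?_)
    rw [Real.norm_of_nonneg (sq_nonneg _), Real.norm_of_nonneg (hV_nonneg k),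
      le_inv_mul_iff₀ hl1']
    exact le_add_of_nonneg_right (by positivity)
  refine IsBigO.of_pow two_ne_zero ((hcV.trans hV).congr_right fun k => ?_)
  exact pow_right_comm β 2 k

/-- The iteration `x k = F (y k)` with momentum `y (k + 1) = x k + α k • (x k - x (k - 1))` for
`k ≥ 1`, started at `y 1 = x 0`; FISTA is the case where `F` is a proximal gradient step. The
sequence `y` is indexed from `1`, so its entry `y 0` is a dummy. -/
def IsMomentumIteration {E : Type*} [AddCommGroup E] [Module ℝ E] (F : E → E) (α : ℕ → ℝ)
    (x y : ℕ → E) : Prop :=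
  y 1 = x 0 ∧ (∀ k, 1 ≤ k → x k = F (y k)) ∧
    ∀ k, 1 ≤ k → y (k + 1) = x k + α k • (x k - x (k - 1))

lemma exists_isMomentumIteration {E : Type*} [AddCommGroup E] [Module ℝ E] (F : E → E)
    (α : ℕ → ℝ) : ∃ x y, IsMomentumIteration F α x y := by
  -- The `k`-th state is `(x k, y (k + 1))`.
  let s : ℕ → E × E := Nat.rec (0, 0) fun k p => (F p.2, F p.2 + α (k + 1) • (F p.2 - p.1))
  refine ⟨fun k => (s k).1, fun k => (s (k - 1)).2, rfl, fun k hk => ?_, fun k hk => ?_⟩ <;>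
  · obtain ⟨k, rfl⟩ := Nat.exists_eq_add_of_le' hk
    rfl

variable {ι E : Type*} [NormedAddCommGroup E] [NormedSpace ℝ E]
  {T : E →ₗ[ℝ] E} {v : Module.Basis ι ℝ E} {l : ι → ℝ}

lemma IsMomentumIteration.convergesLinearly [Finite ι] (hT : ∀ i, T (v i) = l i • v i)
    (hl : ∀ i, l i ∈ Set.Ico (0 : ℝ) 1) {q z : E} (hz : T z + q = z) {α : ℕ → ℝ}
    (hα : ∀ c > 1, ∀ᶠ k in atTop, |α k| ≤ c) {x y : ℕ → E}
    (h : IsMomentumIteration (fun u => T u + q) α x y) : ConvergesLinearly x z := by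
  have := Fintype.ofFinite ι
  -- Of the four factors `t`, two absorb `(α k) ^ 2 ≤ t⁻¹ ^ 2` and two give the rate.
  obtain ⟨t, ⟨ht0, ht1⟩, hlt⟩ := exists_forall_le_pow (fun i => (hl i).2) 4
  have h_error : ∀ k, 1 ≤ k →
      x (k + 1) - z = T (x k - z + α k • ((x k - z) - (x (k - 1) - z))) := by
    intro k hk
    calc x (k + 1) - z = (T (y (k + 1)) + q) - (T z + q) := by rw [h.2.1 (k + 1) (by lia), hz]
      _ = T (y (k + 1) - z) := by rw [add_sub_add_right_eq_sub, map_sub]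
      _ = _ := by rw [h.2.2 k hk, sub_sub_sub_cancel_right, sub_add_eq_add_sub]
  have h_coord : ∀ i, (fun k => v.repr (x k - z) i) =O[atTop] fun k => t ^ k := by
    intro i
    refine isBigO_pow_of_momentum_recurrence (l := l i) (α := α) (hl i).1 (hl i).2 ht0
      ((hlt i).trans (pow_le_pow_of_le_one ht0.le ht1.le (by norm_num))) ?_ ?_
    · filter_upwards [hα t⁻¹ ((one_lt_inv₀ ht0).2 ht1)] with k hk
      calc l i * α k ^ 2 ≤ t ^ 4 * t⁻¹ ^ 2 :=
            mul_le_mul (hlt i) (sq_le_sq' (abs_le.1 hk).1 (abs_le.1 hk).2) (sq_nonneg _)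
              (by positivity)
        _ = t ^ 2 := by field_simp
    · filter_upwards [eventually_ge_atTop 1] with k hk
      rw [h_error k hk, repr_apply_of_eigenbasis hT]
      simp only [map_add, map_smul, map_sub, Finsupp.add_apply, Finsupp.smul_apply,
        Finsupp.sub_apply, smul_eq_mul]
  refine ⟨t, ⟨ht0.le, ht1⟩, ?_⟩
  have h_sum : ∀ k, ∑ i, v.repr (x k - z) i • v i = x k - z := fun k => v.sum_repr _
  refine IsBigO.congr_left (IsBigO.fun_sum fun i _ => ?_) h_sum
  exact ((ContinuousLinearMap.toSpanSingleton ℝ (v i)).isBigO_comp _ _).trans (h_coord i)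

lemma existsUnique_forall_convergesLinearly [Finite ι] (hT : ∀ i, T (v i) = l i • v i)
    (hl : ∀ i, l i ∈ Set.Ico (0 : ℝ) 1) (q : E) {α : ℕ → ℝ}
    (hα : ∀ c > 1, ∀ᶠ k in atTop, |α k| ≤ c) :
    ∃! z, ∀ x y, IsMomentumIteration (fun u => T u + q) α x y → ConvergesLinearly x z := by
  obtain ⟨z, hz⟩ := exists_apply_add_eq_self hT (fun i => (hl i).2.ne) q
  have h_conv x y (h : IsMomentumIteration (fun u => T u + q) α x y) : ConvergesLinearly x z :=
    h.convergesLinearly hT hl hz hα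
  obtain ⟨x, y, hxy⟩ := exists_isMomentumIteration (fun u => T u + q) α
  exact ⟨z, h_conv, fun z' hz' =>
    tendsto_nhds_unique (hz' x y hxy).tendsto (h_conv x y hxy).tendsto⟩

end Momentum

section Irreducible

variable {ι R : Type*} [Fintype ι] [CommRing R] [LinearOrder R] [IsStrictOrderedRing R]
  {K : Matrix ι ι R}

lemma mulVec_one_pos_of_isIrreducible (hK : K.IsIrreducible) (i : ι) :
    0 < (K *ᵥ fun _ => 1) i := by
  classical
  obtain ⟨k, hk, hki⟩ := (isIrreducible_iff_exists_pow_pos hK.nonneg).1 hK i i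
  simp only [mulVec, dotProduct, mul_one]
  refine (Finset.sum_nonneg fun j _ => hK.nonneg i j).lt_of_ne' fun h_zero => hki.ne' ?_
  have h_row : ∀ j, K i j = 0 := fun j =>
    (Finset.sum_eq_zero_iff_of_nonneg fun j _ => hK.nonneg i j).1 h_zero j (Finset.mem_univ j)
  obtain ⟨k, rfl⟩ := Nat.exists_eq_succ_of_ne_zero hk.ne'
  simp [pow_succ', mul_apply, h_row]

lemma eq_of_isIrreducible_of_commute [DecidableEq ι] {w : ι → R} (hK : K.IsIrreducible)
    (h : Commute (diagonal w) K) (i j : ι) : w i = w j := by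
  obtain ⟨k, -, hk⟩ := (isIrreducible_iff_exists_pow_pos hK.nonneg).1 hK i j
  have h_pow := congr_fun₂ (h.pow_right k).eq i j
  rw [diagonal_mul, mul_diagonal, mul_comm] at h_pow
  exact mul_left_cancel₀ hk.ne' h_pow

end Irreducible

section Laplacian

variable {ι : Type*} [Fintype ι] [DecidableEq ι] {K : Matrix ι ι ℝ}

/-- The Laplacian `diag(K𝟙) - K` of the weighted graph with weight matrix `K`. -/
def weightedLaplacian (K : Matrix ι ι ℝ) : Matrix ι ι ℝ := diagonal (K *ᵥ fun _ => 1) - K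

lemma dotProduct_weightedLaplacian_mulVec (hK : K.IsSymm) (w : ι → ℝ) :
    w ⬝ᵥ (weightedLaplacian K *ᵥ w) = (∑ i, ∑ j, K i j * (w i - w j) ^ 2) / 2 := by
  have h_swap : ∑ i, ∑ j, K i j * w j ^ 2 = ∑ i, ∑ j, K i j * w i ^ 2 := by
    rw [Finset.sum_comm]
    simp only [hK.apply]
  have h_expand : ∀ i j, K i j * (w i - w j) ^ 2
      = K i j * w i ^ 2 + K i j * w j ^ 2 - 2 * (w i * (K i j * w j)) := fun i j => by ring
  have h_diag : w ⬝ᵥ (diagonal (K *ᵥ fun _ => 1) *ᵥ w) = ∑ i, ∑ j, K i j * w i ^ 2 := by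
    simp only [dotProduct, mulVec_diagonal]
    simp only [mulVec, dotProduct, mul_one, Finset.sum_mul, Finset.mul_sum]
    exact Finset.sum_congr rfl fun i _ => Finset.sum_congr rfl fun j _ => by ring
  have h_cross : w ⬝ᵥ (K *ᵥ w) = ∑ i, ∑ j, w i * (K i j * w j) := by
    simp only [dotProduct, mulVec, Finset.mul_sum]
  simp only [h_expand, Finset.sum_add_distrib, Finset.sum_sub_distrib, ← Finset.mul_sum]
  rw [weightedLaplacian, sub_mulVec, dotProduct_sub, h_diag, h_cross, h_swap]
  simp only [← Finset.mul_sum]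
  ring

lemma posSemidef_weightedLaplacian (hK : K.IsSymm) (hK0 : ∀ i j, 0 ≤ K i j) :
    (weightedLaplacian K).PosSemidef := by
  refine .of_dotProduct_mulVec_nonneg ?_ fun w => ?_
  · exact (isHermitian_diagonal _).sub ((conjTranspose_eq_transpose_of_trivial K).trans hK)
  · rw [star_trivial, dotProduct_weightedLaplacian_mulVec hK]
    exact div_nonneg (Finset.sum_nonneg fun i _ => Finset.sum_nonneg fun j _ =>
      mul_nonneg (hK0 i j) (sq_nonneg _)) zero_le_two

lemma eq_of_dotProduct_weightedLaplacian_mulVec_eq_zero (hK : K.IsSymm) (hirr : K.IsIrreducible)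
    {w : ι → ℝ} (hw : w ⬝ᵥ (weightedLaplacian K *ᵥ w) = 0) (i j : ι) : w i = w j := by
  refine eq_of_isIrreducible_of_commute hirr ?_ i j
  have h_nonneg : ∀ i j, 0 ≤ K i j * (w i - w j) ^ 2 :=
    fun i j => mul_nonneg (hirr.nonneg i j) (sq_nonneg _)
  have h_zero : ∀ i j, K i j * (w i - w j) ^ 2 = 0 := by
    rw [dotProduct_weightedLaplacian_mulVec hK, div_eq_zero_iff,
      or_iff_left two_ne_zero] at hw
    simpa [Finset.sum_eq_zero_iff_of_nonneg, h_nonneg, Finset.sum_nonneg, -mul_eq_zero] using hw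
  ext i j
  rw [diagonal_mul, mul_diagonal]
  rcases mul_eq_zero.1 (h_zero i j) with hij | hij
  · simp [hij]
  · rw [sub_eq_zero.1 (pow_eq_zero_iff two_ne_zero |>.1 hij), mul_comm]

lemma posDef_weightedLaplacian_add {κ : Type*} [Fintype κ] {A : Matrix κ ι ℝ} (hK : K.IsSymm)
    (hirr : K.IsIrreducible) (hA : (A *ᵥ fun _ => 1) ≠ 0) {γ : ℝ} (hγ : 0 < γ) :
    (weightedLaplacian K + γ • (Aᵀ * A)).PosDef := by
  have hL := posSemidef_weightedLaplacian hK hirr.nonneg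
  have hG : (Aᵀ * A).PosSemidef := posSemidef_conjTranspose_mul_self A
  refine .of_dotProduct_mulVec_pos (hL.add (hG.smul hγ.le)).isHermitian fun w hw => ?_
  have hLw : 0 ≤ w ⬝ᵥ (weightedLaplacian K *ᵥ w) := hL.dotProduct_mulVec_nonneg w
  have hAw : w ⬝ᵥ ((Aᵀ * A) *ᵥ w) = (A *ᵥ w) ⬝ᵥ (A *ᵥ w) := by
    rw [← mulVec_mulVec, dotProduct_mulVec, vecMul_transpose]
  have hAw0 : 0 ≤ (A *ᵥ w) ⬝ᵥ (A *ᵥ w) := dotProduct_self_star_nonneg (A *ᵥ w)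
  rw [star_trivial, add_mulVec, smul_mulVec, dotProduct_add, dotProduct_smul, smul_eq_mul, hAw]
  refine lt_of_le_of_ne (by positivity) fun h_zero => hw ?_
  obtain ⟨hLw', hAw'⟩ := (add_eq_zero_iff_of_nonneg hLw (by positivity)).1 h_zero.symm
  have h_const := eq_of_dotProduct_weightedLaplacian_mulVec_eq_zero hK hirr hLw'
  replace hAw' : A *ᵥ w = 0 :=
    dotProduct_self_eq_zero.1 ((mul_eq_zero.1 hAw').resolve_left hγ.ne')
  ext i
  have hwi : w = w i • fun _ => 1 := funext fun j => by simp [h_const i j]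
  rw [hwi, mulVec_smul] at hAw'
  exact (smul_eq_zero.1 hAw').resolve_right hA

end Laplacian

section GradientStep

variable {ι : Type*} [Fintype ι] [DecidableEq ι]

lemma mulVec_sub_smul_mulVec_sub {R κ : Type*} [CommRing R] [Fintype κ] (W M : Matrix ι ι R)
    (A : Matrix κ ι R) (b : κ → R) (γ : R) (v : ι → R) :
    W *ᵥ (v - γ • (M *ᵥ (Aᵀ *ᵥ (A *ᵥ v - b)))) =
      (W * (1 - γ • (M * (Aᵀ * A)))).mulVecLin v + W *ᵥ (γ • (M *ᵥ (Aᵀ *ᵥ b))) := by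
  simp only [mulVecLin_apply, ← mulVec_mulVec, sub_mulVec, one_mulVec, smul_mulVec, mulVec_sub,
    smul_sub]
  abel

lemma inv_mul_mul_one_sub_smul {R : Type*} [CommRing R] {D : Matrix ι ι R} (hD : IsUnit D.det)
    (K G : Matrix ι ι R) (γ : R) :
    D⁻¹ * K * (1 - γ • (D⁻¹ * G)) = D⁻¹ * K * D⁻¹ * (D - γ • G) := by
  simp only [mul_sub, mul_one, mul_smul_comm, mul_assoc, nonsing_inv_mul D hD]

lemma sub_mul_mul_mul_eq_add {R : Type*} [CommRing R] {D : Matrix ι ι R} (hD : IsUnit D.det)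
    (K G : Matrix ι ι R) (γ : R) :
    (D - γ • G) - (D - γ • G) * (D⁻¹ * K * D⁻¹) * (D - γ • G) =
      ((D - γ • G) * D⁻¹) * (D - K + γ • G) * (D⁻¹ * (D - γ • G)) +
        (γ • (G * D⁻¹)) * (D - γ • G) * (γ • (D⁻¹ * G)) := by
  have h₁ : D⁻¹ * D = 1 := nonsing_inv_mul D hD
  have h₂ : D * D⁻¹ = 1 := mul_nonsing_inv D hD
  have h₃ (X : Matrix ι ι R) : D * (D⁻¹ * X) = X := by rw [← mul_assoc, h₂, one_mul]
  simp only [mul_sub, sub_mul, mul_add, add_mul, mul_assoc, smul_mul_assoc, mul_smul_comm,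
    h₁, h₂, h₃, mul_one, one_mul, smul_sub, smul_add, smul_smul]
  module

lemma posDef_sub_mul_mul {D K G : Matrix ι ι ℝ} {γ : ℝ} (hD : D.PosDef) (hG : G.IsHermitian)
    (hH : (D - γ • G).PosDef) (hM : (D - K + γ • G).PosDef) :
    ((D - γ • G) - (D - γ • G) * (D⁻¹ * K * D⁻¹) * (D - γ • G)).PosDef := by
  rw [sub_mul_mul_mul_eq_add ((isUnit_iff_isUnit_det D).1 hD.isUnit)]
  have h_inj : Function.Injective (D⁻¹ * (D - γ • G)).mulVec :=
    mulVec_injective_iff_isUnit.2 (hD.inv.isUnit.mul hH.isUnit)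
  have h₁ := hM.conjTranspose_mul_mul_same h_inj
  have h₂ := hH.posSemidef.conjTranspose_mul_mul_same (γ • (D⁻¹ * G))
  rw [conjTranspose_mul, hH.isHermitian.eq, hD.inv.isHermitian.eq] at h₁
  rw [conjTranspose_smul, star_trivial, conjTranspose_mul, hG.eq, hD.inv.isHermitian.eq] at h₂
  exact h₁.add_posSemidef h₂

end GradientStep

section StepSize

lemma posSemidef_lamMax_smul_one_sub {n : ℕ} {S : Matrix (Fin n) (Fin n) ℝ}
    (hS : S.IsHermitian) : (lamMax S • 1 - S).PosSemidef := by
  rw [posSemidef_iff_isHermitian_and_spectrum_nonneg, ← Algebra.algebraMap_eq_smul_one,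
    ← spectrum.singleton_sub_eq]
  refine ⟨(isHermitian_diagonal _).sub hS, ?_⟩
  rintro _ ⟨_, rfl, s, hs, rfl⟩
  exact sub_nonneg.2 (le_csSup finite_real_spectrum.bddAbove hs)

lemma posDef_one_sub_smul {n : ℕ} {S : Matrix (Fin n) (Fin n) ℝ} (hS : S.IsHermitian) {γ : ℝ}
    (hγ0 : 0 < γ) (hγ1 : γ < 1 / lamMax S) : (1 - γ • S).PosDef := by
  have h_pos : 0 < lamMax S := one_div_pos.1 (hγ0.trans hγ1)
  have h_lt : 0 < 1 - γ * lamMax S := sub_pos.2 ((lt_div_iff₀ h_pos).1 hγ1)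
  have h_eq : 1 - γ • S = (1 - γ * lamMax S) • 1 + γ • (lamMax S • 1 - S) := by module
  rw [h_eq]
  exact (PosDef.one.smul h_lt).add_posSemidef ((posSemidef_lamMax_smul_one_sub hS).smul hγ0.le)

lemma posDef_diagonal_sub_smul {n : ℕ} {d : Fin n → ℝ} (hd : ∀ i, 0 < d i)
    {G : Matrix (Fin n) (Fin n) ℝ} (hG : G.IsHermitian) {γ : ℝ} (hγ0 : 0 < γ)
    (hγ1 : γ < 1 / lamMax (diagonal (fun i => (√(d i))⁻¹) * G * diagonal (fun i => (√(d i))⁻¹))) :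
    (diagonal d - γ • G).PosDef := by
  let R : Matrix (Fin n) (Fin n) ℝ := diagonal fun i => (√(d i))⁻¹
  let Q : Matrix (Fin n) (Fin n) ℝ := diagonal fun i => √(d i)
  have hRQ : R * Q = 1 := by simp [R, Q, fun i => (Real.sqrt_pos.2 (hd i)).ne']
  have hQR : Q * R = 1 := mul_eq_one_comm.1 hRQ
  have hQQ : Q * Q = diagonal d := by simp [Q, fun i => Real.mul_self_sqrt (hd i).le]
  have hS : (R * G * R).IsHermitian := by
    simpa [R] using isHermitian_conjTranspose_mul_mul R hG
  have h_eq : diagonal d - γ • G = Qᴴ * (1 - γ • (R * G * R)) * Q := by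
    calc diagonal d - γ • G = Q * Q - γ • ((Q * R) * G * (R * Q)) := by simp [hQQ, hRQ, hQR]
      _ = Q * (1 - γ • (R * G * R)) * Q := by simp [mul_sub, sub_mul, mul_assoc]
      _ = Qᴴ * (1 - γ • (R * G * R)) * Q := by simp [Q]
  rw [h_eq]
  exact (posDef_one_sub_smul hS hγ0 hγ1).conjTranspose_mul_mul_same
    (mulVec_injective_of_isUnit (IsUnit.of_mul_eq_one R hQR))

end StepSize

theorem stmt18_general {ι κ : Type*} [Fintype ι] [DecidableEq ι] [Fintype κ] {K : Matrix ι ι ℝ}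
    (hK : K.PosSemidef) (hirr : K.IsIrreducible) {D : Matrix ι ι ℝ}
    (hD : D = diagonal (K *ᵥ fun _ => 1)) {W : Matrix ι ι ℝ} (hW : W = D⁻¹ * K)
    {A : Matrix κ ι ℝ} (hA : A *ᵥ (fun _ => 1) ≠ 0) (b : κ → ℝ) {γ : ℝ} (hγ : 0 < γ)
    (hH : (D - γ • (Aᵀ * A)).PosDef) {α : ℕ → ℝ} (hα : ∀ c > 1, ∀ᶠ k in atTop, |α k| ≤ c) :
    (∃! xs, ∀ x y,
      IsMomentumIteration (fun v => W *ᵥ (v - γ • (D⁻¹ *ᵥ (Aᵀ *ᵥ (A *ᵥ v - b))))) α x y →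
        ConvergesLinearly x xs) ∧
    (∀ μ ∈ spectrum ℂ ((W * (1 - γ • (D⁻¹ * (Aᵀ * A)))).map Complex.ofReal),
      ∃ r : ℝ, μ = r ∧ 0 ≤ r ∧ r < 1) := by
  have hD_pos : D.PosDef := hD ▸ .diagonal (mulVec_one_pos_of_isIrreducible hirr)
  have hL : (D - K + γ • (Aᵀ * A)).PosDef :=
    hD ▸ posDef_weightedLaplacian_add hK.isHermitian hirr hA hγ
  have hB : (D⁻¹ * K * D⁻¹).PosSemidef := by
    have h_conj := hK.conjTranspose_mul_mul_same D⁻¹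
    rwa [hD_pos.inv.isHermitian.eq] at h_conj
  have hP : W * (1 - γ • (D⁻¹ * (Aᵀ * A))) = D⁻¹ * K * D⁻¹ * (D - γ • (Aᵀ * A)) := by
    rw [hW, inv_mul_mul_one_sub_smul ((isUnit_iff_isUnit_det D).1 hD_pos.isUnit)]
  obtain ⟨v, l, hv⟩ := exists_eigenbasis_mul hB.isHermitian hH
  have hl (i : ι) : l i ∈ Set.Ico (0 : ℝ) 1 := eigenvalue_mem_Ico hB hH
    (posDef_sub_mul_mul hD_pos (isHermitian_conjTranspose_mul_self A) hH hL) (v.ne_zero i) (hv i)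
  simp only [mulVec_sub_smul_mulVec_sub, hP]
  refine ⟨existsUnique_forall_convergesLinearly hv hl _ hα, fun μ hμ => ?_⟩
  obtain ⟨i, rfl⟩ : μ ∈ Set.range (Complex.ofRealHom ∘ l) :=
    spectrum_map_eq_range_of_eigenbasis Complex.ofRealHom hv ▸ hμ
  exact ⟨l i, rfl, hl i⟩

theorem stmt18 (n m : ℕ) (K : Matrix (Fin n) (Fin n) ℝ)
    (hK : K.PosSemidef) (hnonneg : ∀ i j, 0 ≤ K i j)
    (hirr : ∀ i j, ∃ k : ℕ, 0 < k ∧ 0 < (K ^ k) i j)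
    (hdiag : ∀ i, 0 < K i i)
    (D : Matrix (Fin n) (Fin n) ℝ)
    (hD : D = Matrix.diagonal (K *ᵥ fun _ => (1 : ℝ)))
    (Dhalf : Matrix (Fin n) (Fin n) ℝ)
    (hDhalf : Dhalf = Matrix.diagonal (fun i => (Real.sqrt ((K *ᵥ fun _ => (1 : ℝ)) i))⁻¹))
    (W : Matrix (Fin n) (Fin n) ℝ) (hW : W = D⁻¹ * K)
    (A : Matrix (Fin m) (Fin n) ℝ) (hA : A ≠ 0)
    (hA1 : A *ᵥ (fun _ => (1 : ℝ)) ≠ 0)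
    (b : Fin m → ℝ)
    (γ : ℝ) (hγ0 : 0 < γ) (hγ1 : γ < 1 / lamMax (Dhalf * (Aᵀ * A) * Dhalf))
    (α : ℕ → ℝ) (hα : Tendsto α atTop (nhds 1)) :
    (∃! xs : Fin n → ℝ,
      ∀ x y : ℕ → Fin n → ℝ,
        y 1 = x 0 →
        (∀ k, 1 ≤ k → x k = W *ᵥ (y k - γ • (D⁻¹ *ᵥ (Aᵀ *ᵥ (A *ᵥ y k - b))))) →
        (∀ k, 1 ≤ k → y (k + 1) = x k + α k • (x k - x (k - 1))) →
        ∃ C, 0 < C ∧ ∃ β, 0 ≤ β ∧ β < 1 ∧ ∃ K', 1 ≤ K' ∧ ∀ k, K' ≤ k →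
          norm2 (x k - xs) ≤ C * β ^ k) ∧
    (∀ μ ∈ spectrum ℂ ((W * (1 - γ • (D⁻¹ * (Aᵀ * A)))).map Complex.ofReal),
      ∃ r : ℝ, μ = (r : ℂ) ∧ 0 ≤ r ∧ r < 1) := by
  have hirr' : K.IsIrreducible := (isIrreducible_iff_exists_pow_pos hnonneg).2 hirr
  have hH : (D - γ • (Aᵀ * A)).PosDef := by
    subst hD hDhalf
    exact posDef_diagonal_sub_smul (mulVec_one_pos_of_isIrreducible hirr')
      (isHermitian_conjTranspose_mul_self A) hγ0 hγ1
  have hα' : ∀ c > 1, ∀ᶠ k in atTop, |α k| ≤ c := fun c hc =>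
    hα.abs.eventually (ge_mem_nhds (abs_one.trans_lt hc))
  simpa only [IsMomentumIteration, and_imp, convergesLinearly_iff_norm2] using
    stmt18_general hK hirr' hD hW hA1 b hγ0 hH hα'
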